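/- Let (X, ·) be a non-degenerate cycle set, and define a ≈ a' if and only if a·b = a'·b for all b ∈ X (an equivalence relation on X). Then the operation · descends to a well-defined binary operation on the quotient X̄ := X/≈ — that is, a ≈ a' and b ≈ b' imply a·b ≈ a'·b' — and X̄ with this induced operation is again a non-degenerate cycle set: the induced left translations are bijective, the induced operation satisfies the cycle identity, and the induced squaring map is bijective. -/

import Mathlib

/-- The retraction equivalence relation on a cycle set:
`a ≈ a'` iff `a·b = a'·b` for all `b`. -/
def retSetoid {X : Type*} (op : X → X → X) : Setoid X :=
  ⟨fun a a' => ∀ b, op a b = op a' b,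
    ⟨fun _ _ => rfl, fun h b => (h b).symm, fun h1 h2 b => (h1 b).trans (h2 b)⟩⟩

/-- For a non-degenerate cycle set `(X, ·)`, the operation
descends to the quotient `X̄ = X/≈`, and the induced structure is again a
non-degenerate cycle set. -/
theorem statement_19 {X : Type*} (op : X → X → X)
    (hbij : ∀ a : X, Function.Bijective (op a))
    (hcyc : ∀ a b c : X, op (op a b) (op a c) = op (op b a) (op b c))
    (hnd : Function.Bijective (fun a : X => op a a)) :
    (∀ a a' b b' : X, (∀ c, op a c = op a' c) → (∀ c, op b c = op b' c) →
      ∀ c, op (op a b) c = op (op a' b') c) ∧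
    ∃ opQ : Quotient (retSetoid op) → Quotient (retSetoid op) →
        Quotient (retSetoid op),
      (∀ a b : X, opQ (Quotient.mk (retSetoid op) a) (Quotient.mk (retSetoid op) b)
          = Quotient.mk (retSetoid op) (op a b)) ∧
      (∀ q, Function.Bijective (opQ q)) ∧
      (∀ q r t, opQ (opQ q r) (opQ q t) = opQ (opQ r q) (opQ r t)) ∧
      Function.Bijective (fun q => opQ q q) := by
  have hwd : ∀ a a' b b' : X, (∀ c, op a c = op a' c) → (∀ c, op b c = op b' c) →
      ∀ c, op (op a b) c = op (op a' b') c := by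
    intro a a' b b' ha hb c
    obtain ⟨d, rfl⟩ := (hbij a).2 c
    rw [← ha b', hcyc a b d, hcyc a b' d, hb a, hb d]
  have hinj : ∀ a b b' : X, (∀ c, op (op a b) c = op (op a b') c) →
      ∀ c, op b c = op b' c := by
    intro a b b' h
    have key : ∀ c, op (op b a) (op b c) = op (op b' a) (op b' c) := by
      intro c
      rw [← hcyc a b c, ← hcyc a b' c, h]
    have hba : op b a = op b' a := hnd.1 (key a)
    intro c
    have hc := key c
    rw [hba] at hc
    exact (hbij _).1 hc
  have hsq : ∀ a b : X, (∀ c, op (op a a) c = op (op b b) c) →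
      ∀ c, op a c = op b c := by
    intro a b h
    obtain ⟨u, hu⟩ := (hbij b).2 (op a a)
    have h1 : op u b = op b b := by
      apply hnd.1
      show op (op u b) (op u b) = op (op b b) (op b b)
      rw [hcyc u b b, hu, h]
    have h2 : op u u = op a a := by
      apply (hbij (op b b)).1
      have h3 := hcyc b u u
      rw [h1, hu] at h3
      rw [← h3, h]
    have h4 : u = a := hnd.1 h2
    subst h4
    intro c
    have h5 := hcyc u b c
    rw [h1, hu, ← h] at h5
    exact (hbij _).1 h5
  refine ⟨hwd, Quotient.map₂ op (fun a a' ha b b' hb => hwd a a' b b' ha hb),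
    fun _ _ => rfl, ?_, ?_, ?_, ?_⟩
  · intro q
    induction q using Quotient.inductionOn with | _ a
    constructor
    · intro r t
      induction r using Quotient.inductionOn with | _ b
      induction t using Quotient.inductionOn with | _ b'
      intro h
      exact Quotient.sound (hinj a b b' (Quotient.exact h))
    · intro r
      induction r using Quotient.inductionOn with | _ b
      obtain ⟨d, rfl⟩ := (hbij a).2 b
      exact ⟨Quotient.mk _ d, rfl⟩
  · intro q r t
    induction q using Quotient.inductionOn with | _ a
    induction r using Quotient.inductionOn with | _ b
    induction t using Quotient.inductionOn with | _ c
    exact congrArg (Quotient.mk (retSetoid op)) (hcyc a b c)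
  · intro r t
    induction r using Quotient.inductionOn with | _ a
    induction t using Quotient.inductionOn with | _ b
    intro h
    exact Quotient.sound (hsq a b (Quotient.exact h))
  · intro r
    induction r using Quotient.inductionOn with | _ b
    obtain ⟨d, rfl⟩ := hnd.2 b
    exact ⟨Quotient.mk _ d, rfl⟩
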